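/- For any string T with RLE size m, the number of minimal absent words aub for T with R(aub) ≥ 2 such that a = u[1] or b = u[|u|] (type-5 MAWs) is O(m). More precisely, each type-5 MAW can be injectively associated with a boundary position k in T where T[k] ≠ T[k+1], so the number of type-5 MAWs is at most twice the number of run boundaries of T. -/

import Mathlib

/-- `w` occurs in `T` iff `w` is a (contiguous) substring, i.e. infix, of `T`. -/
def IsMAW {α : Type*} [DecidableEq α] (w T : List α) : Prop :=
  w ≠ [] ∧ ¬ w <:+: T ∧ ∀ v : List α, v <:+: w → v ≠ w → v <:+: T

/-- RLE size: the number of maximal runs of equal characters. -/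
def rleSize {α : Type*} [DecidableEq α] (w : List α) : ℕ :=
  (w.destutter (· ≠ ·)).length

/-- A bridge: length ≥ 2, first two characters differ, last two characters differ. -/
def IsBridge {α : Type*} (w : List α) : Prop :=
  2 ≤ w.length ∧ w[0]? ≠ w[1]? ∧ w[w.length - 2]? ≠ w[w.length - 1]?

/-- Truncate the first run to exponent 1. -/
def truncHead {α : Type*} [DecidableEq α] : List α → List α
  | [] => []
  | a :: t => a :: t.dropWhile (· == a)

/-- Remove the first run completely. -/
def dropHeadRun {α : Type*} [DecidableEq α] : List α → List α
  | [] => []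
  | a :: t => (a :: t).dropWhile (· == a)

/-- Remove the first run and truncate the new first run to exponent 1. -/
def leftReduce {α : Type*} [DecidableEq α] (w : List α) : List α :=
  truncHead (dropHeadRun w)

/-- `bridgeReduce w = w^{(1)}`: remove the first and last runs and truncate the
new outer runs to exponent 1; the empty string if `R(w) ≤ 2`. -/
def bridgeReduce {α : Type*} [DecidableEq α] (w : List α) : List α :=
  if rleSize w ≤ 2 then [] else (leftReduce ((leftReduce w).reverse)).reverse


instance {α : Type*} [DecidableEq α] : DecidablePred (IsBridge (α := α)) := fun w => by
  unfold IsBridge; infer_instance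

/-- Number of occurrences of `w` in `T`. -/
def countOcc {α : Type*} [DecidableEq α] (w T : List α) : ℕ :=
  ((List.range (T.length + 1)).filter
    (fun i => decide ((T.drop i).take w.length = w ∧ i + w.length ≤ T.length))).length

/-- `K(w)`: the set of bridge substrings `z` of `T` with `z^{(1)} = w`, as a `Finset`. -/
def KFin {α : Type*} [DecidableEq α] (T w : List α) : Finset (List α) :=
  T.sublists.toFinset.filter (fun z => z <:+: T ∧ IsBridge z ∧ bridgeReduce z = w)

/-- `K₊(w) = { z ∈ K(w) : |K(z)| ≥ 2 }`. -/
def KplusFin {α : Type*} [DecidableEq α] (T w : List α) : Finset (List α) :=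
  (KFin T w).filter (fun z => 2 ≤ (KFin T z).card)

/-- `K^{(t)}(w)`: bridge substrings `z` of `T` with `z^{(t)} = w`. -/
def KIter {α : Type*} [DecidableEq α] (T w : List α) (t : ℕ) : Finset (List α) :=
  T.sublists.toFinset.filter (fun z => z <:+: T ∧ IsBridge z ∧ bridgeReduce^[t] z = w)

/-- `K₊^{(t)}(w) = { z ∈ K^{(t)}(w) : |K(z)| ≥ 2 }`. -/
def KplusIter {α : Type*} [DecidableEq α] (T w : List α) (t : ℕ) : Finset (List α) :=
  (KIter T w t).filter (fun z => 2 ≤ (KFin T z).card)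

/-- `K(w)` as a set. -/
def KSet {α : Type*} [DecidableEq α] (T w : List α) : Set (List α) :=
  {z | z <:+: T ∧ IsBridge z ∧ bridgeReduce z = w}

/-- Type-3 MAW: a MAW `a u b` with `R = 3`, `a ≠ u[1]`, `b ≠ u[|u|]`. -/
def IsType3MAW {α : Type*} [DecidableEq α] (w T : List α) : Prop :=
  IsMAW w T ∧ rleSize w = 3 ∧
    ∃ (a b : α) (u : List α), u ≠ [] ∧ w = a :: u ++ [b] ∧
      u.head? ≠ some a ∧ u.getLast? ≠ some b

/-- Type-4 MAW: a MAW `a u b` with `R ≥ 4`, `a ≠ u[1]`, `b ≠ u[|u|]`. -/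
def IsType4MAW {α : Type*} [DecidableEq α] (w T : List α) : Prop :=
  IsMAW w T ∧ 4 ≤ rleSize w ∧
    ∃ (a b : α) (u : List α), u ≠ [] ∧ w = a :: u ++ [b] ∧
      u.head? ≠ some a ∧ u.getLast? ≠ some b

/-- Type-5 MAW: a MAW `a u b` with `R ≥ 2` and `a = u[1]` or `b = u[|u|]`. -/
def IsType5MAW {α : Type*} [DecidableEq α] (w T : List α) : Prop :=
  IsMAW w T ∧ 2 ≤ rleSize w ∧
    ∃ (a b : α) (u : List α), u ≠ [] ∧ w = a :: u ++ [b] ∧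
      (u.head? = some a ∨ u.getLast? = some b)

/-- The exponent of the longest maximal run of `a` in `T`. -/
noncomputable def maxRunLen {α : Type*} [DecidableEq α] (a : α) (T : List α) : ℕ :=
  sSup {q : ℕ | List.replicate q a <:+: T}

/-- `w` occurs in `T` starting at position `k` (0-based). -/
def OccursAt {α : Type*} [DecidableEq α] (w T : List α) (k : ℕ) : Prop :=
  k + w.length ≤ T.length ∧ (T.drop k).take w.length = w

/-!
Let `w = a a u` be a MAW with a letter other than `a`. Then `w = a^(p+1) c v` with `c ≠ a`, and
`a^p c v` occurs in `T`; minimality forces this `a^p` to be a whole maximal run of `T`, since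
otherwise `w` would occur. So `w` is a prefix of the string obtained by starting `T` at that run and
lengthening the run by one letter. That string depends only on the boundary ending the run, and two
MAWs that are prefixes of one string are equal, so there are at most as many such `w` as boundaries.
MAWs of the form `u b b` are the mirror images of these for the reversed text.
-/

section Lists

variable {α : Type*}

theorem exists_eq_replicate_append_cons_of_exists_ne {a : α} {l : List α} (h : ∃ x ∈ l, x ≠ a) :
    ∃ p c v, c ≠ a ∧ l = List.replicate p a ++ c :: v := by
  induction l with
  | nil => simp at h
  | cons b l ih =>
    rcases eq_or_ne b a with rfl | hb
    · obtain ⟨p, c, v, hc, rfl⟩ := ih (by simpa using h)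
      exact ⟨p + 1, c, v, hc, rfl⟩
    · exact ⟨0, b, l, hb, rfl⟩

theorem rtakeWhile_append_of_pos {p : α → Bool} {l₁ l₂ : List α} (h : ∀ x ∈ l₂, p x) :
    (l₁ ++ l₂).rtakeWhile p = l₁.rtakeWhile p ++ l₂ := by
  rw [List.rtakeWhile, List.reverse_append, List.takeWhile_append_of_pos (by simpa using h),
    List.reverse_append, List.reverse_reverse, List.rtakeWhile]

theorem exists_mem_ne_of_two_le_rleSize [DecidableEq α] {w : List α} (h : 2 ≤ rleSize w) (a : α) :
    ∃ x ∈ w, x ≠ a := by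
  by_contra! hall
  have hsub := w.destutter_sublist (· ≠ ·)
  have hchain := w.isChain_destutter (· ≠ ·)
  rw [rleSize] at h
  match hd : w.destutter (· ≠ ·) with
  | [] | [_] => simp [hd] at h
  | x :: y :: l =>
    rw [hd] at hsub hchain
    have hxy : x ≠ y := (List.isChain_cons_cons.1 hchain).1
    exact hxy ((hall x (hsub.subset (by simp))).trans (hall y (hsub.subset (by simp))).symm)

end Lists

section RunBoundaries

variable {α : Type*} [DecidableEq α]

/-- The run boundaries of `T`: the (0-based) positions `k` with `T[k] ≠ T[k + 1]`. Both positions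
are required to lie in `T`, so the last position is not a boundary. -/
def runBoundaries (T : List α) : Finset ℕ :=
  {k ∈ Finset.range (T.length - 1) | T[k]? ≠ T[k + 1]?}

theorem length_mem_runBoundaries {a c : α} (hac : a ≠ c) (l r : List α) :
    l.length ∈ runBoundaries (l ++ a :: c :: r) := by
  simp [runBoundaries, hac]

theorem reflect_mem_runBoundaries_reverse {T : List α} {k : ℕ} (hk : k ∈ runBoundaries T) :
    T.length - 2 - k ∈ runBoundaries T.reverse := by
  simp only [runBoundaries, Finset.mem_filter, Finset.mem_range, List.length_reverse] at hk ⊢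
  obtain ⟨hlt, hne⟩ := hk
  refine ⟨by omega, ?_⟩
  rw [List.getElem?_reverse (by omega), List.getElem?_reverse (by omega),
    show T.length - 1 - (T.length - 2 - k) = k + 1 by omega,
    show T.length - 1 - (T.length - 2 - k + 1) = k by omega]
  exact hne.symm

theorem card_runBoundaries_reverse (T : List α) :
    (runBoundaries T.reverse).card = (runBoundaries T).card := by
  have card_le (S : List α) : (runBoundaries S).card ≤ (runBoundaries S.reverse).card := by
    refine Finset.card_le_card_of_injOn (fun k ↦ S.length - 2 - k)
      (fun k hk ↦ reflect_mem_runBoundaries_reverse hk) fun k hk k' hk' h ↦ ?_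
    simp only [runBoundaries, Finset.mem_coe, Finset.mem_filter, Finset.mem_range] at hk hk' h
    omega
  exact le_antisymm (by simpa using card_le T.reverse) (card_le T)

/-- The string obtained from `T` by deleting everything before the maximal run containing
position `k` and lengthening that run by one letter; `[]` if `k` is not a position of `T`. -/
def lengthenRun (T : List α) (k : ℕ) : List α :=
  T[k]?.toList ++ (T.take k).rtakeWhile (T[k]? == some ·) ++ T.drop k

theorem lengthenRun_append_replicate {a : α} {s : List α} (hs : s.getLast? ≠ some a) (p : ℕ)
    (r : List α) :
    lengthenRun (s ++ List.replicate p a ++ a :: r) (s ++ List.replicate p a).length =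
      List.replicate (p + 2) a ++ r := by
  have hnil : s.rtakeWhile (some a == some ·) = [] := by
    rw [List.rtakeWhile_eq_nil_iff]
    exact fun hne heq ↦ hs ((List.getLast?_eq_some_getLast hne).trans (beq_iff_eq.1 heq).symm)
  have hrun : (s ++ List.replicate p a).rtakeWhile (some a == some ·) = List.replicate p a := by
    rw [rtakeWhile_append_of_pos (by simp), hnil, List.nil_append]
  rw [lengthenRun, List.getElem?_append_right le_rfl, List.take_left, List.drop_left, Nat.sub_self,
    List.getElem?_cons_zero, hrun, List.replicate_succ, List.replicate_succ']
  simp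

end RunBoundaries

section MinimalAbsentWords

variable {α : Type*} [DecidableEq α] {T w w' : List α}

theorem IsMAW.eq_of_isInfix (hw : IsMAW w T) (hw' : IsMAW w' T) (h : w <:+: w') : w = w' :=
  by_contra fun hne ↦ hw.2.1 (hw'.2.2 w h hne)

theorem IsMAW.eq_of_isPrefix_of_isPrefix {z : List α} (hw : IsMAW w T) (hw' : IsMAW w' T)
    (h : w <+: z) (h' : w' <+: z) : w = w' := by
  rcases List.prefix_or_prefix_of_prefix h h' with h | h
  · exact hw.eq_of_isInfix hw' h.isInfix
  · exact (hw'.eq_of_isInfix hw h.isInfix).symm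

theorem IsMAW.reverse (hw : IsMAW w T) : IsMAW w.reverse T.reverse := by
  obtain ⟨hne, habs, hmin⟩ := hw
  refine ⟨by simpa using hne, by simpa [List.reverse_infix] using habs, fun v hv hvw ↦ ?_⟩
  rw [← List.reverse_infix, List.reverse_reverse] at hv ⊢
  exact hmin _ hv fun h ↦ hvw (by rw [← h, List.reverse_reverse])

/-- Type-5 MAWs `a u b` with `a = u[1]`. The condition `R ≥ 2` is expressed by a letter other
than `a`, a form that is visibly invariant under reversal. -/
def IsLeftType5MAW (w T : List α) : Prop :=
  IsMAW w T ∧ ∃ a u, w = a :: a :: u ∧ ∃ x ∈ w, x ≠ a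

theorem IsType5MAW.isLeftType5MAW_or_reverse (hw : IsType5MAW w T) :
    IsLeftType5MAW w T ∨ IsLeftType5MAW w.reverse T.reverse := by
  obtain ⟨hmaw, hrle, a, b, u, -, rfl, hhead | hlast⟩ := hw
  · obtain ⟨v, rfl⟩ := List.head?_eq_some_iff.1 hhead
    exact .inl ⟨hmaw, a, v ++ [b], rfl, exists_mem_ne_of_two_le_rleSize hrle a⟩
  · obtain ⟨v, rfl⟩ := List.getLast?_eq_some_iff.1 hlast
    refine .inr ⟨hmaw.reverse, b, v.reverse ++ [a], by simp, ?_⟩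
    simpa only [List.mem_reverse] using exists_mem_ne_of_two_le_rleSize hrle b

theorem IsMAW.exists_isPrefix_lengthenRun {a c : α} {p : ℕ} {v : List α} (hc : c ≠ a)
    (hw : IsMAW (List.replicate (p + 2) a ++ c :: v) T) :
    ∃ k ∈ runBoundaries T, List.replicate (p + 2) a ++ c :: v <+: lengthenRun T k := by
  obtain ⟨-, habs, hmin⟩ := hw
  obtain ⟨s, t, rfl⟩ := hmin (List.replicate (p + 1) a ++ c :: v)
    (List.suffix_cons _ _).isInfix (by simp)
  have hs : s.getLast? ≠ some a := by
    intro hlast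
    obtain ⟨s', rfl⟩ := List.getLast?_eq_some_iff.1 hlast
    exact habs ⟨s', t, by simp [List.replicate_succ]⟩
  have hT : s ++ (List.replicate (p + 1) a ++ c :: v) ++ t =
      s ++ List.replicate p a ++ a :: c :: (v ++ t) := by
    simp [List.replicate_succ']
  rw [hT]
  refine ⟨_, length_mem_runBoundaries hc.symm _ _, ?_⟩
  rw [lengthenRun_append_replicate hs]
  exact ⟨t, by simp⟩

theorem IsLeftType5MAW.exists_isPrefix_lengthenRun (hw : IsLeftType5MAW w T) :
    ∃ k ∈ runBoundaries T, w <+: lengthenRun T k := by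
  obtain ⟨hmaw, a, u, rfl, hne⟩ := hw
  obtain ⟨p, c, v, hc, rfl⟩ :=
    exists_eq_replicate_append_cons_of_exists_ne (l := u) (by simpa using hne)
  exact IsMAW.exists_isPrefix_lengthenRun hc hmaw

theorem encard_isLeftType5MAW_le (T : List α) :
    {w | IsLeftType5MAW w T}.encard ≤ (runBoundaries T).card := by
  choose! boundary hmem hprefix using
    fun w (hw : IsLeftType5MAW w T) ↦ hw.exists_isPrefix_lengthenRun
  have hinj : Set.InjOn boundary {w | IsLeftType5MAW w T} := fun w hw w' hw' h ↦
    hw.1.eq_of_isPrefix_of_isPrefix hw'.1 (hprefix w hw) (h ▸ hprefix w' hw')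
  rw [← Set.encard_coe_eq_coe_finsetCard]
  exact Set.encard_le_encard_of_injOn hmem hinj

theorem encard_isType5MAW_le (T : List α) :
    {w | IsType5MAW w T}.encard ≤ (2 * (runBoundaries T).card : ℕ) :=
  calc {w | IsType5MAW w T}.encard
    _ ≤ ({w | IsLeftType5MAW w T} ∪ List.reverse '' {w | IsLeftType5MAW w T.reverse}).encard :=
      Set.encard_le_encard fun w hw ↦ hw.isLeftType5MAW_or_reverse.imp_right
        fun h ↦ ⟨w.reverse, h, w.reverse_reverse⟩
    _ ≤ {w | IsLeftType5MAW w T}.encard + {w | IsLeftType5MAW w T.reverse}.encard :=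
      (Set.encard_union_le _ _).trans (add_le_add_right (Set.encard_image_le _ _) _)
    _ ≤ (runBoundaries T).card + (runBoundaries T.reverse).card :=
      add_le_add (encard_isLeftType5MAW_le T) (encard_isLeftType5MAW_le T.reverse)
    _ = (2 * (runBoundaries T).card : ℕ) := by
      rw [card_runBoundaries_reverse, two_mul, Nat.cast_add]

end MinimalAbsentWords

theorem stmt3 {α : Type*} [DecidableEq α] (T : List α) :
    {w : List α | IsType5MAW w T}.ncard ≤
      2 * ((Finset.range T.length).filter (fun k => T[k]? ≠ T[k + 1]?)).card :=
  calc {w : List α | IsType5MAW w T}.ncard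
    _ ≤ 2 * (runBoundaries T).card := ENat.toNat_le_of_le_natCast (encard_isType5MAW_le T)
    _ ≤ 2 * ((Finset.range T.length).filter (fun k => T[k]? ≠ T[k + 1]?)).card := by
      unfold runBoundaries
      gcongr
      exact Nat.sub_le _ _
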